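/- Let (P_δ)_{δ∈Δ} be a family of probability measures on a measurable space M, each with density p_δ with respect to a common σ-finite measure μ, and let f : M → S be measurable with the Fisher–Neyman factorization p_δ(x) = g_δ(f(x))·h(x) μ-a.e. for measurable g_δ, h ≥ 0. Then for δ₀, δ₁ ∈ Δ with P_{δ₁} ≪ P_{δ₀}, the likelihood ratios coincide: (dP_{δ₁}/dP_{δ₀})(x) = (d f_*P_{δ₁}/d f_*P_{δ₀})(f(x)) for P_{δ₀}-almost every x. In particular, the likelihood ratio of the maximal invariant of the data equals the likelihood ratio of a maximal invariant of a sufficient statistic. -/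

import Mathlib

open MeasureTheory ENNReal

/-!
Absorbing `h` into the reference measure, `ν = h μ`, turns the Fisher–Neyman factorization into
`P δ = (g δ ∘ f) ν`, so that `f_* (P δ) = (g δ) (f_* ν)`. Whatever the reference measure, the
likelihood ratio of two measures given by densities is the quotient of the densities, since the zero
set of the denominator carries only a singular part; hence it is `(g δ₁ / g δ₀) ∘ f` on `M` and
`g δ₁ / g δ₀` on `S`.
-/

section WithDensity

variable {α β : Type*} [MeasurableSpace α] [MeasurableSpace β] {ν : Measure α}

theorem ae_lt_top_of_sigmaFinite_withDensity {u : α → ℝ≥0∞} (hu : Measurable u)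
    [SigmaFinite (ν.withDensity u)] : ∀ᵐ x ∂ν, u x < ∞ := by
  let s := spanningSets (ν.withDensity u)
  have hs (n : ℕ) : MeasurableSet (s n) := measurableSet_spanningSets _ n
  have finite_on_piece (n : ℕ) : ∀ᵐ x ∂ν.restrict (s n), u x < ∞ := by
    refine ae_lt_top hu ?_
    rw [← withDensity_apply u (hs n)]
    exact (measure_spanningSets_lt_top _ n).ne
  rw [← Measure.restrict_univ (μ := ν), ← iUnion_spanningSets (ν.withDensity u)]
  exact (ae_restrict_iUnion_iff _ _).2 finite_on_piece

theorem withDensity_eq_restrict_add_withDensity_div {u v : α → ℝ≥0∞} (hu : Measurable u)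
    (hv : Measurable v) (hu_top : ∀ᵐ x ∂ν, u x < ∞) :
    ν.withDensity v =
      (ν.withDensity v).restrict {x | u x = 0} + (ν.withDensity u).withDensity (v / u) := by
  have hs : MeasurableSet {x | u x = 0} := hu (measurableSet_singleton 0)
  have mul_div_ae_eq : u * (v / u) =ᵐ[ν] {x | u x = 0}ᶜ.indicator v := by
    filter_upwards [hu_top] with x hx
    by_cases hx0 : u x = 0
    · simp [hx0]
    · simp [hx0, ENNReal.mul_div_cancel hx0 hx.ne]
  rw [← withDensity_mul ν hu (hv.div hu), withDensity_congr_ae mul_div_ae_eq,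
    withDensity_indicator hs.compl, ← restrict_withDensity hs.compl,
    Measure.restrict_add_restrict_compl hs]

theorem mutuallySingular_restrict_eq_zero_withDensity (κ : Measure α) {u : α → ℝ≥0∞}
    (hu : Measurable u) :
    κ.restrict {x | u x = 0} ⟂ₘ ν.withDensity u := by
  have hs : MeasurableSet {x | u x = 0} := hu (measurableSet_singleton 0)
  refine ⟨{x | u x = 0}ᶜ, hs.compl, ?_, ?_⟩
  · rw [Measure.restrict_apply hs.compl, Set.compl_inter_self, measure_empty]
  · rw [compl_compl, withDensity_apply _ hs]
    exact setLIntegral_eq_zero hs fun _ hx ↦ hx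

theorem rnDeriv_withDensity_withDensity {u v : α → ℝ≥0∞} (hu : Measurable u) (hv : Measurable v)
    [SigmaFinite (ν.withDensity u)] :
    (ν.withDensity v).rnDeriv (ν.withDensity u) =ᵐ[ν.withDensity u] v / u :=
  (Measure.eq_rnDeriv (hv.div hu) (mutuallySingular_restrict_eq_zero_withDensity _ hu)
    (withDensity_eq_restrict_add_withDensity_div hu hv
      (ae_lt_top_of_sigmaFinite_withDensity hu))).symm

theorem map_withDensity_comp {f : α → β} (hf : Measurable f) {g : β → ℝ≥0∞} (hg : Measurable g) :
    (ν.withDensity (g ∘ f)).map f = (ν.map f).withDensity g := by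
  ext s hs
  rw [Measure.map_apply hf hs, withDensity_apply _ (hf hs), withDensity_apply _ hs,
    setLIntegral_map hs hg hf]
  rfl

end WithDensity

theorem rnDeriv_map_of_sufficient_general {M S : Type*} [MeasurableSpace M] [MeasurableSpace S]
    {μ P₀ P₁ : Measure M} {f : M → S} (hf : Measurable f) [SigmaFinite (P₀.map f)]
    {g₀ g₁ : S → ℝ≥0∞} (hg₀ : Measurable g₀) (hg₁ : Measurable g₁)
    {h : M → ℝ≥0∞} (hh : Measurable h)
    (hP₀ : P₀ = μ.withDensity fun x ↦ g₀ (f x) * h x)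
    (hP₁ : P₁ = μ.withDensity fun x ↦ g₁ (f x) * h x) :
    ∀ᵐ x ∂P₀, P₁.rnDeriv P₀ x = (P₁.map f).rnDeriv (P₀.map f) (f x) := by
  have absorb_h {g : S → ℝ≥0∞} (hg : Measurable g) :
      (μ.withDensity fun x ↦ g (f x) * h x) = (μ.withDensity h).withDensity (g ∘ f) := by
    rw [← withDensity_mul μ hh (hg.comp hf), mul_comm]
    rfl
  rw [absorb_h hg₀] at hP₀
  rw [absorb_h hg₁] at hP₁
  have : SigmaFinite P₀ := .of_map _ hf.aemeasurable inferInstance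
  have ratio : P₁.rnDeriv P₀ =ᵐ[P₀] (g₁ ∘ f) / (g₀ ∘ f) := by
    subst hP₀ hP₁
    exact rnDeriv_withDensity_withDensity (hg₀.comp hf) (hg₁.comp hf)
  have ratio_map : (P₁.map f).rnDeriv (P₀.map f) =ᵐ[P₀.map f] g₁ / g₀ := by
    have hmap₀ : P₀.map f = ((μ.withDensity h).map f).withDensity g₀ := by
      rw [hP₀, map_withDensity_comp hf hg₀]
    have : SigmaFinite (((μ.withDensity h).map f).withDensity g₀) := hmap₀ ▸ inferInstance
    rw [hmap₀, hP₁, map_withDensity_comp hf hg₁]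
    exact rnDeriv_withDensity_withDensity hg₀ hg₁
  filter_upwards [ratio, ae_of_ae_map hf.aemeasurable ratio_map] with x hx hfx
  rw [hx, hfx]
  rfl

/-- **Corollary 8 (likelihood ratios coincide under a sufficient reduction).** If `(P δ)`
is a family of probability measures with densities `p δ` with respect to a common σ-finite
measure `μ`, and `f` satisfies the Fisher–Neyman factorization
`p δ x = gd δ (f x) * h x` for `μ`-a.e. `x`, then for `δ₀, δ₁` with `P δ₁ ≪ P δ₀`, the
likelihood ratios coincide: `(dP δ₁/dP δ₀)(x) = (d f_*P δ₁/d f_*P δ₀)(f x)` for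
`P δ₀`-almost every `x`. -/
theorem rnDeriv_map_of_sufficient
    {M S Δ : Type*} [MeasurableSpace M] [MeasurableSpace S]
    (μ : Measure M) [SigmaFinite μ]
    (P : Δ → Measure M) [∀ δ, IsProbabilityMeasure (P δ)]
    (p : Δ → M → ℝ≥0∞) (hp : ∀ δ, Measurable (p δ))
    (hPdens : ∀ δ, P δ = μ.withDensity (p δ))
    (f : M → S) (hf : Measurable f)
    (gd : Δ → S → ℝ≥0∞) (h : M → ℝ≥0∞)
    (hgd : ∀ δ, Measurable (gd δ)) (hh : Measurable h)
    (hfac : ∀ δ, p δ =ᵐ[μ] fun x => gd δ (f x) * h x)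
    (δ₀ δ₁ : Δ) (hac : P δ₁ ≪ P δ₀) :
    ∀ᵐ x ∂(P δ₀),
      (P δ₁).rnDeriv (P δ₀) x = ((P δ₁).map f).rnDeriv ((P δ₀).map f) (f x) := by
  have hP (δ : Δ) := (hPdens δ).trans (withDensity_congr_ae (hfac δ))
  exact rnDeriv_map_of_sufficient_general hf (hgd δ₀) (hgd δ₁) hh (hP δ₀) (hP δ₁)
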